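/- Fix d ∈ {7,11} and let H^(d) = Γ^(d) ∩ Γ_s^(d). Set g₁ = [[0,0,1],[0,−1,0],[1,0,0]], and for each integer k with 1 ≤ k ≤ (d−1)/2 set g_{2k} = [[1,0,0],[k,1,0],[−k²ω_d,−k,1]] and g_{2k+1} = [[1,0,0],[−k,1,0],[−k²ω_d,k,1]], where ω_d = (1+i√d)/2. Then Γ^(d) is the disjoint union of the d+1 left cosets H^(d), g₁H^(d), and g_mH^(d) for m = 2,…,d; in particular these cosets are pairwise disjoint and their union is all of Γ^(d). -/

import Mathlib

/-!
Modulo the prime `i√d` of norm `d`, complex conjugation on `O_d` becomes trivial, so reduction sends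
`Γ^(d)` into the orthogonal group over `𝔽_d` of the ternary quadratic form `2xz + y²`. Its isotropic
lines form a conic with `d + 1` points: `[0 : 0 : 1]` and `[1 : s : -s²/2]` for `s ∈ 𝔽_d`. The
subgroup `H^(d)` consists of the matrices whose reduction fixes the isotropic line spanned by the
first basis vector, so a left coset of `H^(d)` is determined by the point of the conic to which it
moves that line, and the `g_m` reach each of the `d + 1` points exactly once.
-/

noncomputable section

open Matrix

/-- The Hermitian form matrix `J`. -/
def matJ : Matrix (Fin 3) (Fin 3) ℂ := !![0,0,1; 0,1,0; 1,0,0]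

/-- Membership in `U(2,1;J)`. -/
def inU21 (M : Matrix (Fin 3) (Fin 3) ℂ) : Prop := IsUnit M ∧ Mᴴ * matJ * M = matJ

/-- `i√d`. -/
def isqd (d : ℕ) : ℂ := Complex.I * (Real.sqrt d : ℂ)

/-- `ω_d = (1 + i√d)/2`. -/
def ωd (d : ℕ) : ℂ := (1 + Complex.I * (Real.sqrt d : ℂ)) / 2

/-- Membership in the ring of integers `O_d = ℤ + ℤ·ω_d` (for `d ≡ 3 mod 4`). -/
def inOd (d : ℕ) (z : ℂ) : Prop := ∃ a b : ℤ, z = (a : ℂ) + (b : ℂ) * ωd d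

/-- The Picard modular group `Γ^(d)` (as a set of matrices). -/
def GammaPd (d : ℕ) : Set (Matrix (Fin 3) (Fin 3) ℂ) :=
  {M | inU21 M ∧ ∀ j k : Fin 3, inOd d (M j k)}

/-- The sister group `Γ_s^(d)` (as a set of matrices). -/
def GammaSd (d : ℕ) : Set (Matrix (Fin 3) (Fin 3) ℂ) :=
  {M | inU21 M ∧ inOd d (M 0 0) ∧ inOd d (M 0 1) ∧ inOd d (M 1 1) ∧ inOd d (M 1 2) ∧
    inOd d (M 2 2) ∧ inOd d (isqd d * M 0 2) ∧ inOd d (M 1 0 / isqd d) ∧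
    inOd d (M 2 0 / isqd d) ∧ inOd d (M 2 1 / isqd d)}

/-- `H^(d) = Γ^(d) ∩ Γ_s^(d)`. -/
def Hd (d : ℕ) : Set (Matrix (Fin 3) (Fin 3) ℂ) := GammaPd d ∩ GammaSd d

/-- The coset representatives `g_m` for `Γ^(d)`: `g₀ = 1`, `g₁`, and for `1 ≤ k ≤ (d-1)/2`
the matrices `g_{2k}` and `g_{2k+1}`. -/
def gmat (d m : ℕ) : Matrix (Fin 3) (Fin 3) ℂ :=
  if m = 0 then 1
  else if m = 1 then !![0,0,1; 0,-1,0; 1,0,0]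
  else if m % 2 = 0 then
    !![1, 0, 0;
       ((m / 2 : ℕ) : ℂ), 1, 0;
       -((m / 2 : ℕ) : ℂ)^2 * ωd d, -((m / 2 : ℕ) : ℂ), 1]
  else
    !![1, 0, 0;
       -((m / 2 : ℕ) : ℂ), 1, 0;
       -((m / 2 : ℕ) : ℂ)^2 * ωd d, ((m / 2 : ℕ) : ℂ), 1]

section FormUnitary

variable {n R S k : Type*} [Fintype n] [DecidableEq n] [CommRing R] [StarRing R] [CommRing S]
  [StarRing S] [CommRing k] {J A B : Matrix n n R}

/-- The matrices preserving the sesquilinear form with Gram matrix `J`. Invertibility is not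
imposed; it is automatic when `J` is invertible. -/
def formUnitary (J : Matrix n n R) : Submonoid (Matrix n n R) where
  carrier := {A | Aᴴ * J * A = J}
  one_mem' := by simp
  mul_mem' {A B} (hA : Aᴴ * J * A = J) (hB : Bᴴ * J * B = J) :=
    calc (A * B)ᴴ * J * (A * B) = Bᴴ * (Aᴴ * J * A) * B := by
          simp only [conjTranspose_mul, Matrix.mul_assoc]
      _ = J := by rw [hA, hB]

theorem mem_formUnitary_iff : A ∈ formUnitary J ↔ Aᴴ * J * A = J := Iff.rfl

theorem map_mem_formUnitary_iff {f : R →+* S} (hf : Function.Injective f)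
    (hstar : ∀ a, f (star a) = star (f a)) :
    A.map f ∈ formUnitary (J.map f) ↔ A ∈ formUnitary J := by
  rw [mem_formUnitary_iff, mem_formUnitary_iff, ← conjTranspose_map f hstar, ← Matrix.map_mul,
    ← Matrix.map_mul, (Matrix.map_injective hf).eq_iff]

theorem transpose_map_mul_map_of_mem_formUnitary {ρ : R →+* k} (hρ : ∀ a, ρ (star a) = ρ a)
    (hA : A ∈ formUnitary J) : (A.map ρ)ᵀ * J.map ρ * A.map ρ = J.map ρ := by
  have hconj : (A.map ρ)ᵀ = Aᴴ.map ρ := by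
    ext i j
    simp [hρ]
  rw [hconj, ← Matrix.map_mul, ← Matrix.map_mul, hA]

theorem conj_mul_self_of_mem_formUnitary (hJ : J * J = 1) (hA : A ∈ formUnitary J) :
    J * Aᴴ * J * A = 1 := by
  rw [Matrix.mul_assoc, Matrix.mul_assoc, ← Matrix.mul_assoc Aᴴ, hA, hJ]

theorem isUnit_of_mem_formUnitary (hJ : J * J = 1) (hA : A ∈ formUnitary J) : IsUnit A :=
  IsUnit.of_mul_eq_one_right _ (conj_mul_self_of_mem_formUnitary hJ hA)

theorem conj_mem_formUnitary (hJ : J * J = 1) (hJ' : Jᴴ = J) (hA : A ∈ formUnitary J) :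
    J * Aᴴ * J ∈ formUnitary J := by
  have hinv : A * (J * Aᴴ * J) = 1 := mul_eq_one_comm.mp (conj_mul_self_of_mem_formUnitary hJ hA)
  calc (J * Aᴴ * J)ᴴ * J * (J * Aᴴ * J) = J * A * (J * J) * (J * Aᴴ * J) := by
        simp only [conjTranspose_mul, conjTranspose_conjTranspose, hJ', Matrix.mul_assoc]
    _ = J := by rw [hJ, Matrix.mul_one, Matrix.mul_assoc, hinv, Matrix.mul_one]

/-- The `J`-unitary matrices whose image under `ρ` fixes the line spanned by `v`. -/
def lineStabilizer (J : Matrix n n R) (ρ : R →+* k) (v : n → k) : Set (Matrix n n R) :=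
  {A | A ∈ formUnitary J ∧ ∃ u : kˣ, A.map ρ *ᵥ v = u • v}

theorem mem_mul_lineStabilizer_iff (hJ : J * J = 1) (hJ' : Jᴴ = J) {ρ : R →+* k} {v : n → k}
    (hA : A ∈ formUnitary J) (hB : B ∈ formUnitary J) :
    B ∈ (A * ·) '' lineStabilizer J ρ v ↔ ∃ u : kˣ, B.map ρ *ᵥ v = u • (A.map ρ *ᵥ v) := by
  constructor
  · rintro ⟨K, ⟨-, u, hu⟩, rfl⟩
    exact ⟨u, by rw [Matrix.map_mul, ← mulVec_mulVec, hu, mulVec_smul]⟩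
  · rintro ⟨u, hu⟩
    have hinv := conj_mul_self_of_mem_formUnitary hJ hA
    refine ⟨J * Aᴴ * J * B, ⟨mul_mem (conj_mem_formUnitary hJ hJ' hA) hB, u, ?_⟩, ?_⟩
    · rw [Matrix.map_mul, ← mulVec_mulVec, hu, mulVec_smul, mulVec_mulVec, ← Matrix.map_mul, hinv,
        Matrix.map_one _ ρ.map_zero ρ.map_one, one_mulVec]
    · change A * (J * Aᴴ * J * B) = B
      rw [← Matrix.mul_assoc, mul_eq_one_comm.mp hinv, Matrix.one_mul]

theorem map_mulVec_ne_zero_of_mem_formUnitary (hJ : J * J = 1) (ρ : R →+* k) {v : n → k}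
    (hv : v ≠ 0) (hA : A ∈ formUnitary J) : A.map ρ *ᵥ v ≠ 0 := by
  have hunit : IsUnit (A.map ρ) := (isUnit_of_mem_formUnitary hJ hA).map ρ.mapMatrix
  exact fun h => hv (mulVec_injective_of_isUnit hunit (h.trans (mulVec_zero _).symm))

end FormUnitary

section AntidiagonalForm

variable {R k : Type*} [CommRing R] [CommRing k]

/-- The matrix `J` over an arbitrary ring; `matJ` is the case of `ℂ`. -/
def formJ (R : Type*) [CommRing R] : Matrix (Fin 3) (Fin 3) R := !![0,0,1; 0,1,0; 1,0,0]

theorem formJ_mul_self : formJ R * formJ R = 1 := by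
  ext i j
  fin_cases i <;> fin_cases j <;> simp [formJ, Matrix.mul_apply, Fin.sum_univ_three]

theorem conjTranspose_formJ [StarRing R] : (formJ R)ᴴ = formJ R := by
  ext i j
  fin_cases i <;> fin_cases j <;> simp [formJ]

theorem map_formJ (f : R →+* k) : (formJ R).map f = formJ k := by
  ext i j
  fin_cases i <;> fin_cases j <;> simp [formJ]

/-- The antidiagonal matrix `g₁`. -/
def weylElement (R : Type*) [CommRing R] : Matrix (Fin 3) (Fin 3) R := !![0,0,1; 0,-1,0; 1,0,0]

/-- The lower unipotent matrix of slope `s` and corner `-s²w`, as in `g_{2k}` (`s = k`) and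
`g_{2k+1}` (`s = -k`) with `w = ω_d`. -/
def lowerUnipotent (s w : R) : Matrix (Fin 3) (Fin 3) R := !![1,0,0; s,1,0; -(s^2 * w),-s,1]

variable [StarRing R]

theorem weylElement_mem_formUnitary : weylElement R ∈ formUnitary (formJ R) := by
  rw [mem_formUnitary_iff]
  ext i j
  fin_cases i <;> fin_cases j <;>
    simp [weylElement, formJ, Matrix.mul_apply, Fin.sum_univ_three]

theorem lowerUnipotent_mem_formUnitary {s w : R} (hs : IsSelfAdjoint s) (hw : w + star w = 1) :
    lowerUnipotent s w ∈ formUnitary (formJ R) := by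
  have hcorner : -(s ^ 2 * star w) + s * s + -(s ^ 2 * w) = 0 := by
    linear_combination -s ^ 2 * hw
  rw [mem_formUnitary_iff]
  ext i j
  fin_cases i <;> fin_cases j <;>
    simp [lowerUnipotent, formJ, Matrix.mul_apply, Fin.sum_univ_three, hs.star_eq, hcorner]

variable {A : Matrix (Fin 3) (Fin 3) R} {ρ : R →+* k}

theorem column_pairing (hρ : ∀ a, ρ (star a) = ρ a) (hA : A ∈ formUnitary (formJ R))
    (i j : Fin 3) :
    ρ (A 0 i) * ρ (A 2 j) + ρ (A 1 i) * ρ (A 1 j) + ρ (A 2 i) * ρ (A 0 j) = formJ k i j := by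
  rw [← map_formJ ρ, ← transpose_map_mul_map_of_mem_formUnitary hρ hA]
  simp only [formJ, Matrix.mul_apply, transpose_apply, map_apply, of_apply, cons_val', cons_val,
    cons_val_fin_one, Fin.sum_univ_three, map_zero, map_one, mul_zero, mul_one, add_zero, zero_add]
  ring

theorem mem_lineStabilizer_single_zero_iff (hρ : ∀ a, ρ (star a) = ρ a)
    (hA : A ∈ formUnitary (formJ R)) :
    A ∈ lineStabilizer (formJ R) ρ (Pi.single 0 1) ↔ ρ (A 1 0) = 0 ∧ ρ (A 2 0) = 0 := by
  change A ∈ formUnitary (formJ R) ∧ _ ↔ _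
  rw [and_iff_right hA, mulVec_single_one]
  constructor
  · rintro ⟨u, hu⟩
    exact ⟨by simpa using congrFun hu 1, by simpa using congrFun hu 2⟩
  · rintro ⟨h1, h2⟩
    have hunit : ρ (A 0 0) * ρ (A 2 2) = 1 := by
      simpa [h1, h2, formJ] using column_pairing hρ hA 0 2
    refine ⟨Units.mkOfMulEqOne _ _ hunit, ?_⟩
    ext i
    fin_cases i <;> simp [h1, h2, Units.smul_def]

theorem map_two_one_eq_zero_of_mem_lineStabilizer (hρ : ∀ a, ρ (star a) = ρ a)
    (hA : A ∈ lineStabilizer (formJ R) ρ (Pi.single 0 1)) : ρ (A 2 1) = 0 := by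
  obtain ⟨h1, h2⟩ := (mem_lineStabilizer_single_zero_iff hρ hA.1).mp hA
  have h01 : ρ (A 0 0) * ρ (A 2 1) = 0 := by
    simpa [h1, h2, formJ] using column_pairing hρ hA.1 0 1
  have h02 : ρ (A 0 0) * ρ (A 2 2) = 1 := by
    simpa [h1, h2, formJ] using column_pairing hρ hA.1 0 2
  linear_combination ρ (A 2 2) * h01 - ρ (A 2 1) * h02

end AntidiagonalForm

section Conic

/-- The affine point of slope `s` on the conic `2xz + y² = 0`. The parameter `η` stands for `1/2`,
so that the formula matches the reduction of `lowerUnipotent`. -/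
def conicPoint {k : Type*} [CommRing k] (η s : k) : Fin 3 → k := ![1, s, -(s^2 * η)]

variable {k : Type*} [Field k] {η s : k} {v : Fin 3 → k}

theorem exists_eq_smul_conicPoint_iff (hη : 2 * η = 1) (hv : 2 * v 0 * v 2 + v 1 ^ 2 = 0) :
    (∃ u : kˣ, v = u • conicPoint η s) ↔ v 0 ≠ 0 ∧ s = v 1 / v 0 := by
  constructor
  · rintro ⟨u, rfl⟩
    simp [conicPoint, Units.smul_def]
  · rintro ⟨h0, rfl⟩
    have h2 : v 2 = -(v 0 * ((v 1 / v 0) ^ 2 * η)) := by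
      field_simp
      linear_combination η * hv - v 0 * v 2 * hη
    refine ⟨Units.mk0 _ h0, ?_⟩
    ext i
    fin_cases i
    · simp [conicPoint]
    · simp [conicPoint, field]
    · simpa [conicPoint] using h2

theorem exists_eq_smul_infinity_iff (hv0 : v ≠ 0) (hv : 2 * v 0 * v 2 + v 1 ^ 2 = 0) :
    (∃ u : kˣ, v = u • ![0, 0, 1]) ↔ v 0 = 0 := by
  constructor
  · rintro ⟨u, rfl⟩
    simp
  · intro h0
    have h1 : v 1 = 0 := by simpa [h0] using hv
    have h2 : v 2 ≠ 0 := fun h2 => hv0 (by ext i; fin_cases i <;> simp [h0, h1, h2])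
    refine ⟨Units.mk0 _ h2, ?_⟩
    ext i
    fin_cases i <;> simp [h0, h1]

end Conic

section Slopes

variable {d : ℕ}

/-- The slope of `g_m` for `m ≠ 1`: it is `k` for `m = 2k` and `-k` for `m = 2k + 1`. -/
def cosetSlope (m : ℕ) : ℤ := if m % 2 = 0 then (m / 2 : ℕ) else -(m / 2 : ℕ)

theorem cosetSlope_eq_iff {m : ℕ} (hd : Odd d) (hm : m ≤ d) (t : ZMod d) :
    (cosetSlope m : ZMod d) = t ↔ cosetSlope m = t.valMinAbs := by
  have : NeZero d := ⟨hd.pos.ne'⟩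
  have hmem : cosetSlope m * 2 ∈ Set.Ioc (-d : ℤ) d := by
    obtain ⟨e, rfl⟩ := hd
    rw [cosetSlope, Set.mem_Ioc]
    split <;> omega
  rw [eq_comm, eq_comm (a := cosetSlope m), ZMod.valMinAbs_spec, and_iff_left hmem]

theorem existsUnique_cosetSlope_eq (hd : Odd d) (t : ZMod d) :
    ∃! m, m ≤ d ∧ m ≠ 1 ∧ (cosetSlope m : ZMod d) = t := by
  have : NeZero d := ⟨hd.pos.ne'⟩
  have hbound := t.natAbs_valMinAbs_le
  obtain ⟨m, hmd, hm1, hm⟩ : ∃ m, m ≤ d ∧ m ≠ 1 ∧ cosetSlope m = t.valMinAbs := by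
    refine ⟨if 0 ≤ t.valMinAbs then 2 * t.valMinAbs.natAbs else 2 * t.valMinAbs.natAbs + 1, ?_⟩
    obtain ⟨e, rfl⟩ := hd
    unfold cosetSlope
    split_ifs <;> omega
  refine ⟨m, ⟨hmd, hm1, (cosetSlope_eq_iff hd hmd t).mpr hm⟩, ?_⟩
  rintro n ⟨hnd, hn1, hn⟩
  rw [cosetSlope_eq_iff hd hnd, ← hm] at hn
  unfold cosetSlope at hn
  split_ifs at hn <;> omega

/-- The points of the conic `2xz + y² = 0` over `ZMod d`, indexed like the `g_m`; `η` stands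
for `1/2`. -/
def indexedConicPoint (η : ZMod d) (m : ℕ) : Fin 3 → ZMod d :=
  if m = 1 then ![0, 0, 1] else conicPoint η (cosetSlope m)

theorem existsUnique_eq_smul_indexedConicPoint [Fact d.Prime] {η : ZMod d} (hd : Odd d)
    (hη : 2 * η = 1) {v : Fin 3 → ZMod d} (hv0 : v ≠ 0) (hv : 2 * v 0 * v 2 + v 1 ^ 2 = 0) :
    ∃! m, m ≤ d ∧ ∃ u : (ZMod d)ˣ, v = u • indexedConicPoint η m := by
  have hindex (m : ℕ) : (∃ u : (ZMod d)ˣ, v = u • indexedConicPoint η m) ↔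
      if m = 1 then v 0 = 0 else v 0 ≠ 0 ∧ cosetSlope m = v 1 / v 0 := by
    unfold indexedConicPoint
    split
    · exact exists_eq_smul_infinity_iff hv0 hv
    · exact exists_eq_smul_conicPoint_iff hη hv
  simp only [hindex]
  by_cases h0 : v 0 = 0
  · exact ⟨1, ⟨hd.pos, by simp [h0]⟩, fun n hn => by simpa [h0] using hn.2⟩
  · refine (existsUnique_congr fun m => ?_).mp (existsUnique_cosetSlope_eq hd (v 1 / v 0))
    by_cases hm : m = 1 <;> simp [hm, h0]

end Slopes

section QuadraticIntegers

open QuadraticAlgebra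

variable {d : ℕ}

/-- The coefficient `c = (d + 1) / 4` in `ω² = ω - c`. -/
def omegaNorm (d : ℕ) : ℕ := (d + 1) / 4

/-- An abstract model of `O_d` with basis `1, ω`. Working in it rather than in a subring of `ℂ`
makes ring homomorphisms out of `O_d` available by prescribing the image of `ω`. -/
abbrev QuadInt (d : ℕ) : Type := QuadraticAlgebra ℤ (-omegaNorm d) 1

theorem omega_add_star_omega : (ω : QuadInt d) + star ω = 1 := by
  ext <;> simp

theorem isqd_eq : isqd d = 2 * ωd d - 1 := by
  unfold isqd ωd
  ring

variable [hd : Fact (d % 4 = 3)]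

theorem four_mul_omegaNorm : 4 * omegaNorm d = d + 1 := by
  have := hd.out
  unfold omegaNorm
  omega

theorem four_mul_omegaNorm_zmod : (4 * omegaNorm d : ZMod d) = 1 := by
  have h := congrArg (Nat.cast (R := ZMod d)) (four_mul_omegaNorm (d := d))
  push_cast at h
  simpa using h

theorem ωd_mul_self : ωd d * ωd d = ωd d - omegaNorm d := by
  have hsqrt : (Real.sqrt d : ℂ) ^ 2 = d := by
    rw [← Complex.ofReal_pow, Real.sq_sqrt (Nat.cast_nonneg d), Complex.ofReal_natCast]
  have hc : (4 * omegaNorm d : ℂ) = d + 1 := mod_cast four_mul_omegaNorm (d := d)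
  unfold ωd
  linear_combination
    (1/4 : ℂ) * (Real.sqrt d : ℂ) ^ 2 * Complex.I_sq - (1/4 : ℂ) * hsqrt + (1/4 : ℂ) * hc

/-- The embedding of `O_d` into `ℂ`. -/
def toComplex (d : ℕ) [Fact (d % 4 = 3)] : QuadInt d →+* ℂ :=
  (QuadraticAlgebra.lift ⟨ωd d, by
    rw [ωd_mul_self, neg_smul, natCast_zsmul, nsmul_one, one_smul]
    ring⟩ : QuadInt d →ₐ[ℤ] ℂ)

/-- The reduction of `O_d` modulo `i√d`; since `i√d = 2ω - 1`, it sends `ω` to `1/2 = 2c`. -/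
def residue (d : ℕ) [Fact (d % 4 = 3)] : QuadInt d →+* ZMod d :=
  (QuadraticAlgebra.lift ⟨2 * (omegaNorm d : ZMod d), by
    rw [neg_smul, natCast_zsmul, nsmul_one, one_smul]
    linear_combination (omegaNorm d : ZMod d) * four_mul_omegaNorm_zmod (d := d)⟩ :
      QuadInt d →ₐ[ℤ] ZMod d)

theorem toComplex_apply (a : QuadInt d) : toComplex d a = a.re + a.im * ωd d := by
  simp [toComplex, QuadraticAlgebra.lift]

theorem residue_apply (a : QuadInt d) : residue d a = a.re + a.im * (2 * omegaNorm d) := by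
  simp [residue, QuadraticAlgebra.lift]

theorem inOd_iff {z : ℂ} : inOd d z ↔ ∃ a : QuadInt d, toComplex d a = z := by
  constructor
  · rintro ⟨x, y, rfl⟩
    exact ⟨⟨x, y⟩, toComplex_apply _⟩
  · rintro ⟨a, rfl⟩
    exact ⟨a.re, a.im, toComplex_apply a⟩

theorem inOd_toComplex (a : QuadInt d) : inOd d (toComplex d a) := inOd_iff.mpr ⟨a, rfl⟩

theorem toComplex_omega : toComplex d ω = ωd d := by simp [toComplex_apply]

theorem toComplex_star (a : QuadInt d) : toComplex d (star a) = star (toComplex d a) := by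
  simp only [toComplex_apply, re_star, im_star, ωd, star_add, star_mul', star_div₀, star_intCast,
    star_one, star_ofNat, RCLike.star_def, Complex.conj_I, Complex.conj_ofReal]
  push_cast
  ring

theorem toComplex_injective : Function.Injective (toComplex d) := by
  have hsqrt : Real.sqrt d ≠ 0 := by
    have := hd.out
    have : 0 < d := by omega
    positivity
  refine (injective_iff_map_eq_zero _).mpr fun a ha => ?_
  rw [toComplex_apply] at ha
  have him : a.im = 0 := by simpa [ωd, hsqrt] using congrArg Complex.im ha
  have hre : a.re = 0 := by simpa [him] using ha
  exact QuadraticAlgebra.ext hre him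

theorem toComplex_two_mul_omega_sub_one : toComplex d (2 * ω - 1) = isqd d := by
  rw [isqd_eq, map_sub, map_mul, toComplex_omega, map_one, map_ofNat]

theorem isqd_ne_zero : isqd d ≠ 0 := by
  rw [← toComplex_two_mul_omega_sub_one, map_ne_zero_iff _ toComplex_injective]
  intro h
  simpa using congrArg QuadraticAlgebra.im h

theorem residue_star (a : QuadInt d) : residue d (star a) = residue d a := by
  simp only [residue_apply, re_star, im_star]
  push_cast
  linear_combination -(a.im : ZMod d) * four_mul_omegaNorm_zmod (d := d)

theorem two_mul_residue_omega : 2 * residue d ω = 1 := by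
  rw [← four_mul_omegaNorm_zmod (d := d), residue_apply]
  simp only [omega_re, omega_im]
  push_cast
  ring

theorem residue_eq_zero_iff {a : QuadInt d} : residue d a = 0 ↔ 2 * ω - 1 ∣ a := by
  constructor
  · intro h
    have hdvd : (d : ℤ) ∣ a.re + a.im * (2 * omegaNorm d) := by
      rw [← ZMod.intCast_zmod_eq_zero_iff_dvd, ← h, residue_apply]
      push_cast
      rfl
    obtain ⟨t, ht⟩ := hdvd
    have hc : (4 * omegaNorm d : ℤ) = d + 1 := mod_cast four_mul_omegaNorm (d := d)
    refine ⟨⟨t, a.im - 2 * t⟩, QuadraticAlgebra.ext ?_ ?_⟩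
    · simp only [re_mul, im_mul, re_sub, im_sub, re_ofNat, im_ofNat, omega_re, omega_im, re_one,
        im_one]
      linear_combination ht - t * hc
    · simp only [re_mul, im_mul, re_sub, im_sub, re_ofNat, im_ofNat, omega_re, omega_im, re_one,
        im_one]
      ring
  · rintro ⟨b, rfl⟩
    rw [map_mul, map_sub, map_mul, map_ofNat, map_one, two_mul_residue_omega, sub_self, zero_mul]

theorem inOd_toComplex_div_isqd_iff {a : QuadInt d} :
    inOd d (toComplex d a / isqd d) ↔ residue d a = 0 := by
  rw [inOd_iff, residue_eq_zero_iff, dvd_iff_exists_eq_mul_left]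
  refine exists_congr fun b => ?_
  rw [eq_div_iff isqd_ne_zero, ← toComplex_two_mul_omega_sub_one, ← map_mul,
    toComplex_injective.eq_iff, eq_comm]

end QuadraticIntegers

section PicardModularGroup

open QuadraticAlgebra

variable {d : ℕ}

/-- The model of `Γ^(d)` with entries in the abstract ring `O_d`. -/
abbrev picardMatrices (d : ℕ) : Submonoid (Matrix (Fin 3) (Fin 3) (QuadInt d)) :=
  formUnitary (formJ (QuadInt d))

/-- The model of `H^(d)` with entries in the abstract ring `O_d`: the matrices fixing the point
`[1 : 0 : 0]` of the conic modulo `i√d`. -/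
abbrev basePointStabilizer (d : ℕ) [Fact (d % 4 = 3)] :
    Set (Matrix (Fin 3) (Fin 3) (QuadInt d)) :=
  lineStabilizer (formJ (QuadInt d)) (residue d) (Pi.single 0 1)

/-- The matrix `g_m` with entries in the abstract ring `O_d`. -/
def cosetRep (d m : ℕ) : Matrix (Fin 3) (Fin 3) (QuadInt d) :=
  if m = 1 then weylElement _ else lowerUnipotent (cosetSlope m : QuadInt d) ω

theorem cosetRep_mem_picardMatrices (m : ℕ) : cosetRep d m ∈ picardMatrices d := by
  unfold cosetRep
  split
  · exact weylElement_mem_formUnitary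
  · exact lowerUnipotent_mem_formUnitary (star_intCast _) omega_add_star_omega

theorem inU21_iff {M : Matrix (Fin 3) (Fin 3) ℂ} : inU21 M ↔ M ∈ formUnitary (formJ ℂ) :=
  and_iff_right_of_imp (isUnit_of_mem_formUnitary formJ_mul_self)

variable [hd : Fact (d % 4 = 3)]

theorem map_cosetRep (m : ℕ) : (toComplex d).mapMatrix (cosetRep d m) = gmat d m := by
  ext i j
  unfold gmat cosetRep cosetSlope
  split_ifs <;> fin_cases i <;> fin_cases j <;>
    simp_all [-Int.natCast_ediv, weylElement, lowerUnipotent, toComplex_omega]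

theorem map_residue_cosetRep_mulVec (m : ℕ) :
    (cosetRep d m).map (residue d) *ᵥ Pi.single 0 1 = indexedConicPoint (residue d ω) m := by
  rw [mulVec_single_one]
  unfold cosetRep indexedConicPoint
  split <;> ext i <;> fin_cases i <;> simp [weylElement, lowerUnipotent, conicPoint]

theorem map_toComplex_mem_GammaPd_iff {A : Matrix (Fin 3) (Fin 3) (QuadInt d)} :
    A.map (toComplex d) ∈ GammaPd d ↔ A ∈ picardMatrices d := by
  rw [← map_mem_formUnitary_iff toComplex_injective toComplex_star, map_formJ, ← inU21_iff]
  exact and_iff_left fun i j => inOd_toComplex (A i j)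

theorem map_toComplex_mem_Hd_iff {A : Matrix (Fin 3) (Fin 3) (QuadInt d)} :
    A.map (toComplex d) ∈ Hd d ↔ A ∈ basePointStabilizer d := by
  constructor
  · rintro ⟨hA, -, -, -, -, -, -, -, h10, h20, -⟩
    rw [map_toComplex_mem_GammaPd_iff] at hA
    exact (mem_lineStabilizer_single_zero_iff residue_star hA).mpr
      ⟨inOd_toComplex_div_isqd_iff.mp h10, inOd_toComplex_div_isqd_iff.mp h20⟩
  · intro hA
    obtain ⟨h10, h20⟩ := (mem_lineStabilizer_single_zero_iff residue_star hA.1).mp hA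
    have h21 := map_two_one_eq_zero_of_mem_lineStabilizer residue_star hA
    have hΓ := map_toComplex_mem_GammaPd_iff.mpr hA.1
    have h02 : inOd d (isqd d * toComplex d (A 0 2)) := by
      rw [← toComplex_two_mul_omega_sub_one, ← map_mul]
      exact inOd_toComplex _
    exact ⟨hΓ, hΓ.1, hΓ.2 0 0, hΓ.2 0 1, hΓ.2 1 1, hΓ.2 1 2, hΓ.2 2 2, h02,
      inOd_toComplex_div_isqd_iff.mpr h10, inOd_toComplex_div_isqd_iff.mpr h20,
      inOd_toComplex_div_isqd_iff.mpr h21⟩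

theorem mapMatrix_toComplex_injective :
    Function.Injective ((toComplex d).mapMatrix (m := Fin 3)) :=
  Matrix.map_injective toComplex_injective

theorem exists_map_toComplex_eq {M : Matrix (Fin 3) (Fin 3) ℂ} (hM : M ∈ GammaPd d) :
    ∃ A : Matrix (Fin 3) (Fin 3) (QuadInt d), A.map (toComplex d) = M := by
  choose A hA using fun i j => inOd_iff.mp (hM.2 i j)
  exact ⟨of A, Matrix.ext hA⟩

theorem GammaPd_eq_image : GammaPd d = (toComplex d).mapMatrix '' picardMatrices d := by
  ext M
  constructor
  · intro hM
    obtain ⟨A, rfl⟩ := exists_map_toComplex_eq hM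
    exact ⟨A, map_toComplex_mem_GammaPd_iff.mp hM, rfl⟩
  · rintro ⟨A, hA, rfl⟩
    exact map_toComplex_mem_GammaPd_iff.mpr hA

theorem Hd_eq_image : Hd d = (toComplex d).mapMatrix '' basePointStabilizer d := by
  ext M
  constructor
  · intro hM
    obtain ⟨A, rfl⟩ := exists_map_toComplex_eq hM.1
    exact ⟨A, map_toComplex_mem_Hd_iff.mp hM, rfl⟩
  · rintro ⟨A, hA, rfl⟩
    exact map_toComplex_mem_Hd_iff.mpr hA

theorem gmat_coset_eq_image (m : ℕ) :
    (gmat d m * ·) '' Hd d = (toComplex d).mapMatrix '' ((cosetRep d m * ·) ''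
      basePointStabilizer d) := by
  simp only [Hd_eq_image, Set.image_image, map_mul, map_cosetRep]

theorem coset_subset_picardMatrices (m : ℕ) :
    (cosetRep d m * ·) '' basePointStabilizer d ⊆ picardMatrices d := by
  rintro _ ⟨K, hK, rfl⟩
  exact mul_mem (cosetRep_mem_picardMatrices m) hK.1

theorem existsUnique_mem_coset [Fact d.Prime] {A : Matrix (Fin 3) (Fin 3) (QuadInt d)}
    (hA : A ∈ picardMatrices d) :
    ∃! m, m ≤ d ∧ A ∈ (cosetRep d m * ·) '' basePointStabilizer d := by
  have hcoset (m : ℕ) := mem_mul_lineStabilizer_iff formJ_mul_self conjTranspose_formJ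
    (ρ := residue d) (v := Pi.single 0 1) (cosetRep_mem_picardMatrices m) hA
  simp only [hcoset, map_residue_cosetRep_mulVec]
  have hodd : Odd d := Nat.odd_iff.mpr (by have := hd.out; omega)
  refine existsUnique_eq_smul_indexedConicPoint hodd two_mul_residue_omega
    (map_mulVec_ne_zero_of_mem_formUnitary formJ_mul_self _ (by simp) hA) ?_
  have hpair := column_pairing residue_star hA 0 0
  rw [show formJ (ZMod d) 0 0 = 0 from rfl] at hpair
  rw [mulVec_single_one]
  simp only [col_apply, map_apply]
  linear_combination hpair

theorem iUnion_coset_eq [Fact d.Prime] :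
    ⋃ m ∈ Finset.range (d + 1), (cosetRep d m * ·) '' basePointStabilizer d =
      picardMatrices d := by
  refine Set.Subset.antisymm (Set.iUnion₂_subset fun m _ => coset_subset_picardMatrices m)
    fun A hA => ?_
  obtain ⟨m, hm, hAm⟩ := (existsUnique_mem_coset hA).exists
  exact Set.mem_biUnion (Finset.mem_range_succ_iff.mpr hm) hAm

theorem disjoint_coset [Fact d.Prime] {m n : ℕ} (hm : m ≤ d) (hn : n ≤ d) (hmn : m ≠ n) :
    Disjoint ((cosetRep d m * ·) '' basePointStabilizer d)
      ((cosetRep d n * ·) '' basePointStabilizer d) :=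
  Set.disjoint_left.mpr fun _ hAm hAn => hmn <|
    (existsUnique_mem_coset (coset_subset_picardMatrices m hAm)).unique ⟨hm, hAm⟩ ⟨hn, hAn⟩

end PicardModularGroup

theorem gammaPd_coset_decomposition_general {d : ℕ} (hd : d.Prime) (hd4 : d % 4 = 3) :
    (GammaPd d = ⋃ m ∈ Finset.range (d + 1), (gmat d m * ·) '' Hd d) ∧
    (∀ m ∈ Finset.range (d + 1), ∀ n ∈ Finset.range (d + 1), m ≠ n →
      Disjoint ((gmat d m * ·) '' Hd d) ((gmat d n * ·) '' Hd d)) := by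
  have := Fact.mk hd
  have := Fact.mk hd4
  constructor
  · simp only [gmat_coset_eq_image, ← Set.image_iUnion₂, iUnion_coset_eq, GammaPd_eq_image]
  · intro m hm n hn hmn
    rw [gmat_coset_eq_image, gmat_coset_eq_image,
      Set.disjoint_image_iff mapMatrix_toComplex_injective]
    exact disjoint_coset (Finset.mem_range_succ_iff.mp hm) (Finset.mem_range_succ_iff.mp hn) hmn

/-- For `d ∈ {7,11}`, `Γ^(d)` is the disjoint union of the `d+1` left cosets
`g_m H^(d)`, `m = 0, 1, …, d`. -/
theorem gammaPd_coset_decomposition :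
    ∀ d ∈ ({7, 11} : Set ℕ),
      (GammaPd d = ⋃ m ∈ Finset.range (d + 1), (gmat d m * ·) '' Hd d) ∧
      (∀ m ∈ Finset.range (d + 1), ∀ n ∈ Finset.range (d + 1), m ≠ n →
        Disjoint ((gmat d m * ·) '' Hd d) ((gmat d n * ·) '' Hd d)) := by
  rintro d (rfl | rfl)
  · exact gammaPd_coset_decomposition_general (by norm_num) (by norm_num)
  · exact gammaPd_coset_decomposition_general (by norm_num) (by norm_num)
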